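/- Let L be a complete orthomodular lattice and let B', B be subsets of L with B' ⊆ B, each closed under sInf and sSup of arbitrary subsets and under the orthocomplementation x ↦ xᗮ, each atomistic (every b in the subset is the sSup of the atoms of that subset lying below b, where an atom of a subset C is an element a ∈ C with a ≠ ⊥ such that every y ∈ C with y < a equals ⊥), and such that p ⊓ (q ⊔ r) = (p ⊓ q) ⊔ (p ⊓ r) and p ⊔ (q ⊓ r) = (p ⊔ q) ⊓ (p ⊔ r) for all p, q, r ∈ B. Then for every x ∈ L and every atom a' of B' with a' ≤ δ_{B'}(x), there exists an atom a of B with a ≤ δ_B(x) and δ_{B'}(a) = a'. -/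

import Mathlib

/-- The daseinisation of `x` to a subset `B` of a complete lattice:
`δ_B(x) := sInf {y ∈ B | x ≤ y}`. -/
def das {L : Type*} [CompleteLattice L] (B : Set L) (x : L) : L :=
  sInf {y ∈ B | x ≤ y}

/-- `a` is an atom of the subset `C`: `a ∈ C`, `a ≠ ⊥`, and every element of `C`
strictly below `a` is `⊥`. -/
def IsAtomOf {L : Type*} [CompleteLattice L] (C : Set L) (a : L) : Prop :=
  a ∈ C ∧ a ≠ ⊥ ∧ ∀ y ∈ C, y < a → y = ⊥

/-!
For `c ∈ B' ⊆ B`, the conditions `δ_{B'}(x) ≤ c`, `x ≤ c` and `δ_B(x) ≤ c` are equivalent. If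
`δ_B(x)` were disjoint from `a'`, distributivity in `B` would put it below the complement `c` of
`a'`, so that `a' ≤ δ_{B'}(x) ≤ c`, which is absurd. Hence some atom `a` of `B` lies below
`δ_B(x) ⊓ a'`, and `δ_{B'}(a) = a'` because the atom `a'` lies below every element of `B'` that
it meets.
-/

theorem le_of_inf_sup_eq_of_disjoint_of_codisjoint {L : Type*} [Lattice L] [BoundedOrder L]
    {p q r : L} (hdist : p ⊓ (q ⊔ r) = (p ⊓ q) ⊔ (p ⊓ r)) (hpq : Disjoint p q)
    (hqr : Codisjoint q r) : p ≤ r := by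
  rw [hqr.eq_top, hpq.eq_bot, inf_top_eq, bot_sup_eq] at hdist
  exact inf_eq_left.mp hdist.symm

section CompleteLattice

variable {L : Type*} [CompleteLattice L] {B B' : Set L} {a b c x : L}

theorem infClosed_of_forall_sInf_mem (hB : ∀ S ⊆ B, sInf S ∈ B) : InfClosed B := by
  intro p hp q hq
  rw [← sInf_pair]
  exact hB _ (Set.pair_subset hp hq)

theorem le_das : x ≤ das B x :=
  le_sInf fun _ hy => hy.2

theorem das_le_iff_of_mem (hc : c ∈ B) : das B x ≤ c ↔ x ≤ c :=
  ⟨le_das.trans, fun hxc => sInf_le ⟨hc, hxc⟩⟩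

theorem das_mem (hB : ∀ S ⊆ B, sInf S ∈ B) : das B x ∈ B :=
  hB _ fun _ hy => hy.1

theorem not_disjoint_das_of_le_das (hsub : B' ⊆ B) (hc : c ∈ B') (hbc : IsCompl b c)
    (hdist : das B x ⊓ (b ⊔ c) = (das B x ⊓ b) ⊔ (das B x ⊓ c))
    (hb : b ≠ ⊥) (hle : b ≤ das B' x) : ¬Disjoint (das B x) b := by
  intro hdisj
  have hBc : das B x ≤ c :=
    le_of_inf_sup_eq_of_disjoint_of_codisjoint hdist hdisj hbc.codisjoint
  have hB'c : das B' x ≤ c :=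
    (das_le_iff_of_mem hc).mpr ((das_le_iff_of_mem (hsub hc)).mp hBc)
  exact hb (hbc.disjoint.eq_bot_of_le (hle.trans hB'c))

theorem exists_isAtomOf_le_of_eq_sSup (hb : b = sSup {a | IsAtomOf B a ∧ a ≤ b})
    (hne : b ≠ ⊥) : ∃ a, IsAtomOf B a ∧ a ≤ b := by
  by_contra! hno
  apply hne
  rw [hb, sSup_eq_bot]
  exact fun a ha => absurd ha.2 (hno a ha.1)

theorem IsAtomOf.le_of_not_disjoint (hB : InfClosed B) (ha : IsAtomOf B a) (hb : b ∈ B)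
    (hab : ¬Disjoint a b) : a ≤ b := by
  by_contra hle
  exact hab (disjoint_iff.mpr (ha.2.2 _ (hB ha.1 hb) (inf_lt_left.mpr hle)))

theorem IsAtomOf.das_eq (hB : InfClosed B) (ha : IsAtomOf B a) (hx : x ≠ ⊥) (hxa : x ≤ a) :
    das B x = a := by
  refine le_antisymm ((das_le_iff_of_mem ha.1).mpr hxa) (le_sInf fun y hy => ?_)
  exact ha.le_of_not_disjoint hB hy.1 fun hdisj => hx (le_bot_iff.mp (hdisj hxa hy.2))

theorem atom_below_das_lift_general (hsub : B' ⊆ B)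
    (hInfB : ∀ S ⊆ B, sInf S ∈ B) (hInfB' : InfClosed B')
    (hcomplB' : ∀ b ∈ B', ∃ c ∈ B', IsCompl b c)
    (hatomicB : ∀ b ∈ B, b ≠ ⊥ → ∃ a, IsAtomOf B a ∧ a ≤ b)
    (hdist : ∀ p ∈ B, ∀ q ∈ B, ∀ r ∈ B, p ⊓ (q ⊔ r) = (p ⊓ q) ⊔ (p ⊓ r))
    (x : L) {a' : L} (ha' : IsAtomOf B' a') (hle : a' ≤ das B' x) :
    ∃ a, IsAtomOf B a ∧ a ≤ das B x ∧ das B' a = a' := by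
  obtain ⟨c, hc, hac⟩ := hcomplB' a' ha'.1
  have hmem : das B x ∈ B := das_mem hInfB
  have hmeet : ¬Disjoint (das B x) a' :=
    not_disjoint_das_of_le_das hsub hc hac (hdist _ hmem _ (hsub ha'.1) _ (hsub hc)) ha'.2.1 hle
  obtain ⟨a, ha, ha_le⟩ := hatomicB (das B x ⊓ a')
    (infClosed_of_forall_sInf_mem hInfB hmem (hsub ha'.1)) (disjoint_iff.not.mp hmeet)
  obtain ⟨ha_das, ha_a'⟩ := le_inf_iff.mp ha_le
  exact ⟨a, ha, ha_das, ha'.das_eq hInfB' ha.2.1 ha_a'⟩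

end CompleteLattice

/-- In a complete orthomodular lattice, with `B' ⊆ B` complete atomistic Boolean
sublattices, every atom `a'` of `B'` below `δ_{B'}(x)` arises as `δ_{B'}(a)` for
some atom `a` of `B` below `δ_B(x)`. -/
theorem atom_below_das_lift {L : Type*} [CompleteLattice L] (oc : L → L)
    (h_inf : ∀ x : L, x ⊓ oc x = ⊥) (h_sup : ∀ x : L, x ⊔ oc x = ⊤)
    (h_anti : ∀ x y : L, x ≤ y → oc y ≤ oc x) (h_inv : ∀ x : L, oc (oc x) = x)
    (h_om : ∀ x y : L, x ≤ y → y = x ⊔ (y ⊓ oc x))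
    (B' B : Set L) (hsub : B' ⊆ B)
    (hInfB : ∀ S ⊆ B, sInf S ∈ B) (hSupB : ∀ S ⊆ B, sSup S ∈ B)
    (hInfB' : ∀ S ⊆ B', sInf S ∈ B') (hSupB' : ∀ S ⊆ B', sSup S ∈ B')
    (hocB : ∀ b ∈ B, oc b ∈ B) (hocB' : ∀ b ∈ B', oc b ∈ B')
    (hatomisticB : ∀ b ∈ B, b = sSup {a | IsAtomOf B a ∧ a ≤ b})
    (hatomisticB' : ∀ b ∈ B', b = sSup {a | IsAtomOf B' a ∧ a ≤ b})
    (hdist1 : ∀ p ∈ B, ∀ q ∈ B, ∀ r ∈ B, p ⊓ (q ⊔ r) = (p ⊓ q) ⊔ (p ⊓ r))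
    (hdist2 : ∀ p ∈ B, ∀ q ∈ B, ∀ r ∈ B, p ⊔ (q ⊓ r) = (p ⊔ q) ⊓ (p ⊔ r)) :
    ∀ x : L, ∀ a' : L, IsAtomOf B' a' → a' ≤ das B' x →
      ∃ a : L, IsAtomOf B a ∧ a ≤ das B x ∧ das B' a = a' := by
  intro x a' ha' hle
  exact atom_below_das_lift_general hsub hInfB (infClosed_of_forall_sInf_mem hInfB')
    (fun b hb => ⟨oc b, hocB' b hb, IsCompl.of_eq (h_inf b) (h_sup b)⟩)
    (fun b hb => exists_isAtomOf_le_of_eq_sSup (hatomisticB b hb)) hdist1 x ha' hle
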